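/- Let Ω ⊂ ℝ² be a bounded open set and M > 0 a constant such that for every t > 0 the Lebesgue measure of {x ∈ Ω : dist(x, ∂Ω) ≤ t} is at most M·t. Let 0 < ε₁ and 0 < ε₂ ≤ 1, let C > 0, and let E : Ω → ℝ be twice continuously differentiable with, for all x ∈ Ω and d(x) := dist(x, ∂Ω): |E(x)| ≤ C e^{−d(x)/ε₂}, |∇E(x)| ≤ C ε₂⁻¹ e^{−d(x)/ε₂}, and |ΔE(x)| ≤ C ε₂⁻² e^{−d(x)/ε₂}. Then the squared energy norm of (E, ε₁ΔE) satisfies ‖E‖²_{L²(Ω)} + ε₂² ‖∇E‖²_{L²(Ω)} + ε₁² ‖ΔE‖²_{L²(Ω)} ≤ C² M ( ε₂ + ε₁²/ε₂³ ). -/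

import Mathlib

open MeasureTheory Real Metric

/-- The Laplacian of a function on `ℝ²`, as the sum of the second partial derivatives. -/
noncomputable def lap (u : EuclideanSpace ℝ (Fin 2) → ℝ) (x : EuclideanSpace ℝ (Fin 2)) : ℝ :=
  ∑ i : Fin 2,
    fderiv ℝ (fun y => fderiv ℝ u y (EuclideanSpace.single i 1)) x (EuclideanSpace.single i 1)

/-!
By the layer-cake formula, the integral of `e^{-d/ε}` is `∫₀^∞ |{e^{-d/ε} > t}| dt`. The set
`{e^{-d/ε} > t}` is the strip `{d < -ε log t}`, empty for `t ≥ 1`, so the strip condition bounds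
the integral by `M ε ∫₀¹ (-log t) dt = M ε`. The square of a function below `K e^{-d/ε₂}` thus has
integral at most `K² M ε₂ / 2`; take `K = C`, `C ε₂⁻¹`, `C ε₂⁻²` for `E`, `∇E`, `ΔE`.
-/

open Set InnerProductSpace Laplacian

theorem lintegral_Ioi_ofReal_neg_log :
    ∫⁻ t in Ioi (0 : ℝ), ENNReal.ofReal (-log t) = 1 := by
  have h_Ioi : ∫⁻ t in Ioi (1 : ℝ), ENNReal.ofReal (-log t) = 0 :=
    setLIntegral_eq_zero measurableSet_Ioi fun t ht ↦
      ENNReal.ofReal_of_nonpos (neg_nonpos.2 (log_nonneg (mem_Ioi.1 ht).le))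
  have h_int : IntegrableOn (fun t ↦ -log t) (Ioc 0 1) :=
    ((intervalIntegrable_iff_integrableOn_Ioc_of_le zero_le_one).1
      intervalIntegral.intervalIntegrable_log').neg
  have h_nonneg : 0 ≤ᵐ[volume.restrict (Ioc 0 1)] fun t ↦ -log t :=
    ae_restrict_of_forall_mem measurableSet_Ioc fun t ht ↦
      neg_nonneg.2 (log_nonpos ht.1.le ht.2)
  rw [← Ioc_union_Ioi_eq_Ioi zero_le_one, lintegral_union measurableSet_Ioi Ioc_disjoint_Ioi_same,
    h_Ioi, add_zero, ← ofReal_integral_eq_lintegral_ofReal h_int h_nonneg,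
    ← intervalIntegral.integral_of_le zero_le_one, intervalIntegral.integral_neg, integral_log]
  simp

theorem norm_sq_le_of_norm_le_exp_neg_div {F : Type*} [SeminormedAddCommGroup F] {v : F}
    {K s ε : ℝ} (hv : ‖v‖ ≤ K * exp (-s / ε)) :
    ‖v‖ ^ 2 ≤ K ^ 2 * exp (-s / (ε / 2)) :=
  calc
    ‖v‖ ^ 2 ≤ (K * exp (-s / ε)) ^ 2 := by gcongr
    _ = K ^ 2 * exp (-s / (ε / 2)) := by
      rw [mul_pow, ← exp_nat_mul]
      congr 2
      push_cast
      ring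

/-- The strip condition on a distance function `d`: the set where `d ≤ t` has measure at most
`M t`. The domain is encoded in `μ`, the restriction of a measure to it. -/
structure HasLinearStrips {α : Type*} [MeasurableSpace α] (μ : Measure α) (d : α → ℝ) (M : ℝ) :
    Prop where
  aemeasurable : AEMeasurable d μ
  ae_nonneg : 0 ≤ᵐ[μ] d
  const_nonneg : 0 ≤ M
  measure_le : ∀ t, 0 < t → μ {x | d x ≤ t} ≤ ENNReal.ofReal (M * t)

namespace HasLinearStrips

theorem restrict_infDist {X : Type*} [PseudoMetricSpace X] [MeasurableSpace X]
    [OpensMeasurableSpace X] {μ : Measure X} {Ω : Set X} (hΩ : MeasurableSet Ω) (S : Set X)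
    {M : ℝ} (hM : 0 ≤ M)
    (hstrip : ∀ t, 0 < t → μ {x ∈ Ω | infDist x S ≤ t} ≤ ENNReal.ofReal (M * t)) :
    HasLinearStrips (μ.restrict Ω) (infDist · S) M where
  aemeasurable := measurable_infDist.aemeasurable
  ae_nonneg := ae_of_all _ fun _ ↦ infDist_nonneg
  const_nonneg := hM
  measure_le t ht := by
    rw [Measure.restrict_apply' hΩ, inter_comm]
    exact hstrip t ht

variable {α : Type*} [MeasurableSpace α] {μ : Measure α} {d : α → ℝ} {M ε : ℝ}

theorem measure_lt_exp_neg_div_le (h : HasLinearStrips μ d M) (hε : 0 < ε) {t : ℝ} (ht : 0 < t) :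
    μ {x | t < exp (-d x / ε)} ≤ ENNReal.ofReal (M * ε * -log t) := by
  have h_iff (x : α) : t < exp (-d x / ε) ↔ d x < ε * -log t := by
    rw [← log_lt_iff_lt_exp ht, lt_div_iff₀' hε, mul_neg, lt_neg]
  simp only [h_iff, mul_assoc]
  rcases lt_or_ge t 1 with ht1 | ht1
  · have h_pos : 0 < ε * -log t := mul_pos hε (neg_pos.2 (log_neg ht ht1))
    exact (measure_mono (ofPred_subset_ofPred_of_imp fun _ ↦ le_of_lt)).trans (h.measure_le _ h_pos)
  · have h_nonpos : ε * -log t ≤ 0 :=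
      mul_nonpos_of_nonneg_of_nonpos hε.le (neg_nonpos.2 (log_nonneg ht1))
    have h_null : μ {x | d x < ε * -log t} = 0 :=
      measure_eq_zero_iff_ae_notMem.2 (h.ae_nonneg.mono fun x hx ↦ not_lt.2 (h_nonpos.trans hx))
    exact h_null.trans_le zero_le

theorem aemeasurable_exp_neg_div (h : HasLinearStrips μ d M) (ε : ℝ) :
    AEMeasurable (fun x ↦ exp (-d x / ε)) μ :=
  (h.aemeasurable.neg.div_const ε).exp

theorem lintegral_exp_neg_div_le (h : HasLinearStrips μ d M) (hε : 0 < ε) :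
    ∫⁻ x, ENNReal.ofReal (exp (-d x / ε)) ∂μ ≤ ENNReal.ofReal (M * ε) :=
  calc
    ∫⁻ x, ENNReal.ofReal (exp (-d x / ε)) ∂μ
      = ∫⁻ t in Ioi 0, μ {x | t < exp (-d x / ε)} :=
        lintegral_eq_lintegral_meas_lt μ (ae_of_all _ fun _ ↦ exp_nonneg _)
          (h.aemeasurable_exp_neg_div ε)
    _ ≤ ∫⁻ t in Ioi 0, ENNReal.ofReal (M * ε) * ENNReal.ofReal (-log t) :=
        setLIntegral_mono' measurableSet_Ioi fun t ht ↦ by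
          rw [← ENNReal.ofReal_mul (mul_nonneg h.const_nonneg hε.le)]
          exact h.measure_lt_exp_neg_div_le hε ht
    _ = ENNReal.ofReal (M * ε) := by
        rw [lintegral_const_mul' _ _ ENNReal.ofReal_ne_top, lintegral_Ioi_ofReal_neg_log, mul_one]

theorem integrable_exp_neg_div (h : HasLinearStrips μ d M) (hε : 0 < ε) :
    Integrable (fun x ↦ exp (-d x / ε)) μ := by
  refine ⟨(h.aemeasurable_exp_neg_div ε).aestronglyMeasurable, ?_⟩
  rw [hasFiniteIntegral_iff_ofReal (ae_of_all _ fun _ ↦ exp_nonneg _)]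
  exact (h.lintegral_exp_neg_div_le hε).trans_lt ENNReal.ofReal_lt_top

theorem integral_exp_neg_div_le (h : HasLinearStrips μ d M) (hε : 0 < ε) :
    ∫ x, exp (-d x / ε) ∂μ ≤ M * ε := by
  rw [integral_eq_lintegral_of_nonneg_ae (ae_of_all _ fun _ ↦ exp_nonneg _)
    (h.aemeasurable_exp_neg_div ε).aestronglyMeasurable]
  exact ENNReal.toReal_le_of_le_ofReal (mul_nonneg h.const_nonneg hε.le)
    (h.lintegral_exp_neg_div_le hε)

variable {F : Type*} [NormedAddCommGroup F] {g : α → F} {K : ℝ}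

theorem memLp_two_of_norm_le_exp_neg_div (h : HasLinearStrips μ d M) (hε : 0 < ε)
    (hg_meas : AEStronglyMeasurable g μ) (hg : ∀ᵐ x ∂μ, ‖g x‖ ≤ K * exp (-d x / ε)) :
    MemLp g 2 μ := by
  rw [memLp_two_iff_integrable_sq_norm hg_meas]
  refine ((h.integrable_exp_neg_div (half_pos hε)).const_mul (K ^ 2)).mono'
    (hg_meas.norm.pow 2) (hg.mono fun x hx ↦ ?_)
  rw [norm_pow, norm_norm]
  exact norm_sq_le_of_norm_le_exp_neg_div hx

theorem integral_norm_sq_le_of_norm_le_exp_neg_div (h : HasLinearStrips μ d M) (hε : 0 < ε)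
    (hg : ∀ᵐ x ∂μ, ‖g x‖ ≤ K * exp (-d x / ε)) :
    ∫ x, ‖g x‖ ^ 2 ∂μ ≤ K ^ 2 * (M * (ε / 2)) :=
  calc
    ∫ x, ‖g x‖ ^ 2 ∂μ ≤ ∫ x, K ^ 2 * exp (-d x / (ε / 2)) ∂μ :=
      integral_mono_of_nonneg (ae_of_all _ fun _ ↦ sq_nonneg _)
        ((h.integrable_exp_neg_div (half_pos hε)).const_mul _)
        (hg.mono fun _ ↦ norm_sq_le_of_norm_le_exp_neg_div)
    _ = K ^ 2 * ∫ x, exp (-d x / (ε / 2)) ∂μ := integral_const_mul _ _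
    _ ≤ K ^ 2 * (M * (ε / 2)) := by
      gcongr
      exact h.integral_exp_neg_div_le (half_pos hε)

end HasLinearStrips

theorem lap_eq_laplacian {u : EuclideanSpace ℝ (Fin 2) → ℝ} {x : EuclideanSpace ℝ (Fin 2)}
    (hu : ContDiffAt ℝ 2 u x) : lap u x = Δ u x := by
  have h_diff : DifferentiableAt ℝ (fderiv ℝ u) x :=
    (hu.fderiv_right (m := 1) (by norm_num)).differentiableAt (by norm_num)
  rw [laplacian_eq_iteratedFDeriv_orthonormalBasis u (EuclideanSpace.basisFun (Fin 2) ℝ), lap]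
  simp [iteratedFDeriv_two_apply, fderiv_clm_apply h_diff]

theorem continuousOn_gradient {𝕜 V : Type*} [RCLike 𝕜] [NormedAddCommGroup V]
    [InnerProductSpace 𝕜 V] [CompleteSpace V] {u : V → 𝕜} {Ω : Set V} (hΩ : IsOpen Ω)
    (hu : ContDiffOn 𝕜 1 u Ω) : ContinuousOn (gradient u) Ω :=
  (toDual 𝕜 V).symm.continuous.comp_continuousOn (hu.continuousOn_fderiv_of_isOpen hΩ le_rfl)

section FiniteDimensional

variable {V : Type*} [NormedAddCommGroup V] [InnerProductSpace ℝ V] [FiniteDimensional ℝ V]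
  {Ω : Set V}

theorem continuousOn_laplacian {F : Type*} [NormedAddCommGroup F] [NormedSpace ℝ F] {u : V → F}
    (hΩ : IsOpen Ω) (hu : ContDiffOn ℝ 2 u Ω) : ContinuousOn (Δ u) Ω := by
  have h_fderiv : ContDiffOn ℝ 1 (fderiv ℝ u) Ω := hu.fderiv_of_isOpen hΩ (by norm_num)
  have h_fderiv_fderiv : ContinuousOn (fderiv ℝ (fderiv ℝ u)) Ω :=
    h_fderiv.continuousOn_fderiv_of_isOpen hΩ le_rfl
  rw [laplacian_eq_iteratedFDeriv_stdOrthonormalBasis]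
  simp only [iteratedFDeriv_two_apply]
  fun_prop

variable [MeasurableSpace V] [BorelSpace V] {μ : Measure V}

theorem energy_norm_slow_layer_general
    (hΩ : IsOpen Ω) {M : ℝ} (hM : 0 ≤ M)
    (hstrip : ∀ t : ℝ, 0 < t →
      μ {x ∈ Ω | infDist x (frontier Ω) ≤ t} ≤ ENNReal.ofReal (M * t))
    (ε₁ : ℝ) {ε₂ C : ℝ} (hε₂ : 0 < ε₂) {E : V → ℝ} (hE : ContDiffOn ℝ 2 E Ω)
    (hE0 : ∀ x ∈ Ω, |E x| ≤ C * exp (-(infDist x (frontier Ω)) / ε₂))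
    (hE1 : ∀ x ∈ Ω, ‖gradient E x‖ ≤ C * ε₂⁻¹ * exp (-(infDist x (frontier Ω)) / ε₂))
    (hE2 : ∀ x ∈ Ω, |Δ E x| ≤ C * ε₂⁻¹ ^ 2 * exp (-(infDist x (frontier Ω)) / ε₂)) :
    (MemLp E 2 (μ.restrict Ω) ∧ MemLp (gradient E) 2 (μ.restrict Ω) ∧
      MemLp (Δ E) 2 (μ.restrict Ω)) ∧
    (∫ x in Ω, E x ^ 2 ∂μ) + ε₂ ^ 2 * (∫ x in Ω, ‖gradient E x‖ ^ 2 ∂μ)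
      + ε₁ ^ 2 * (∫ x in Ω, Δ E x ^ 2 ∂μ)
      ≤ C ^ 2 * M * (ε₂ + ε₁ ^ 2 / ε₂ ^ 3) := by
  have hΩ_meas := hΩ.measurableSet
  have h := HasLinearStrips.restrict_infDist hΩ_meas (frontier Ω) hM hstrip
  have h0 := ae_restrict_of_forall_mem (μ := μ) hΩ_meas hE0
  have h1 := ae_restrict_of_forall_mem (μ := μ) hΩ_meas hE1
  have h2 := ae_restrict_of_forall_mem (μ := μ) hΩ_meas hE2
  refine ⟨⟨h.memLp_two_of_norm_le_exp_neg_div hε₂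
      (hE.continuousOn.aestronglyMeasurable hΩ_meas) h0,
    h.memLp_two_of_norm_le_exp_neg_div hε₂
      ((continuousOn_gradient hΩ (hE.of_le one_le_two)).aestronglyMeasurable hΩ_meas) h1,
    h.memLp_two_of_norm_le_exp_neg_div hε₂
      ((continuousOn_laplacian hΩ hE).aestronglyMeasurable hΩ_meas) h2⟩, ?_⟩
  have hI0 := h.integral_norm_sq_le_of_norm_le_exp_neg_div (g := E) hε₂ h0
  have hI1 := h.integral_norm_sq_le_of_norm_le_exp_neg_div hε₂ h1
  have hI2 := h.integral_norm_sq_le_of_norm_le_exp_neg_div (g := Δ E) hε₂ h2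
  simp only [norm_eq_abs, sq_abs] at hI0 hI2
  calc
    _ ≤ C ^ 2 * (M * (ε₂ / 2)) + ε₂ ^ 2 * ((C * ε₂⁻¹) ^ 2 * (M * (ε₂ / 2)))
        + ε₁ ^ 2 * ((C * ε₂⁻¹ ^ 2) ^ 2 * (M * (ε₂ / 2))) := by gcongr
    _ = C ^ 2 * M * (ε₂ + ε₁ ^ 2 / ε₂ ^ 3 / 2) := by field_simp; ring
    _ ≤ C ^ 2 * M * (ε₂ + ε₁ ^ 2 / ε₂ ^ 3) := by
      gcongr _ * (_ + ?_)
      exact half_le_self (by positivity)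

end FiniteDimensional

/-- Energy norm of the slow boundary layer component `E₂ ~ e^{−dist(x,∂Ω)/ε₂}`:
`|||(E, ε₁ΔE)|||² ≤ C² M (ε₂ + ε₁²/ε₂³)`. -/
theorem energy_norm_slow_layer
    (Ω : Set (EuclideanSpace ℝ (Fin 2)))
    (hΩ_open : IsOpen Ω) (hΩ_bdd : Bornology.IsBounded Ω)
    (M : ℝ) (hM : 0 < M)
    (hstrip : ∀ t : ℝ, 0 < t →
      volume {x ∈ Ω | infDist x (frontier Ω) ≤ t} ≤ ENNReal.ofReal (M * t))
    (ε₁ ε₂ : ℝ) (hε₁ : 0 < ε₁) (hε₂ : 0 < ε₂) (hε₂1 : ε₂ ≤ 1)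
    (C : ℝ) (hC : 0 < C)
    (E : EuclideanSpace ℝ (Fin 2) → ℝ) (hE_smooth : ContDiff ℝ 2 E)
    (hE0 : ∀ x ∈ Ω, |E x| ≤ C * Real.exp (-(infDist x (frontier Ω)) / ε₂))
    (hE1 : ∀ x ∈ Ω, ‖gradient E x‖ ≤ C * ε₂⁻¹ * Real.exp (-(infDist x (frontier Ω)) / ε₂))
    (hE2 : ∀ x ∈ Ω, |lap E x| ≤ C * ε₂⁻¹ ^ 2 * Real.exp (-(infDist x (frontier Ω)) / ε₂)) :
    (∫ x in Ω, E x ^ 2) + ε₂ ^ 2 * (∫ x in Ω, ‖gradient E x‖ ^ 2)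
      + ε₁ ^ 2 * (∫ x in Ω, lap E x ^ 2)
      ≤ C ^ 2 * M * (ε₂ + ε₁ ^ 2 / ε₂ ^ 3) := by
  have hΔ : lap E = Δ E := funext fun _ ↦ lap_eq_laplacian hE_smooth.contDiffAt
  rw [hΔ] at hE2 ⊢
  exact (energy_norm_slow_layer_general hΩ_open hM.le hstrip ε₁ hε₂ hE_smooth.contDiffOn
    hE0 hE1 hE2).2
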